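/- arXiv:1803.03138 — 7 statements merged into one kernel-verified Lean document; each statement's English description precedes it below -/
import Mathlib

section
/- Let V be a finite-dimensional vector space over 𝔽₂ and B a nondegenerate alternating bilinear form on V. For any two quadratic refinements q and q′ of B there exists a unique p ∈ V such that q′ x = q x + B p x for all x ∈ V. In other words, the action of V on the set of quadratic refinements given by (p • q) x = q x + B p x is simply transitive. -/
/-- For a nondegenerate alternating bilinear form `B` on a finite-dimensional
`𝔽₂`-vector space, any two quadratic refinements `q`, `q'` of `B` differ by `B p ·`
for a unique `p`: the action `(p • q) x = q x + B p x` on refinements is simply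
transitive. -/
theorem quadratic_refinements_torsor
    (V : Type*) [AddCommGroup V] [Module (ZMod 2) V] [FiniteDimensional (ZMod 2) V]
    (B : V →ₗ[ZMod 2] V →ₗ[ZMod 2] ZMod 2) (hB : ∀ v : V, B v v = 0)
    (hnd : ∀ v : V, B v = 0 → v = 0)
    (q q' : V → ZMod 2)
    (hq : ∀ x y : V, q (x + y) + q x + q y = B x y)
    (hq' : ∀ x y : V, q' (x + y) + q' x + q' y = B x y) :
    ∃! p : V, ∀ x : V, q' x = q x + B p x := by
  have hadd : ∀ x y : V, q' (x + y) - q (x + y) = (q' x - q x) + (q' y - q y) := by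
    intro x y
    have key : ∀ a b c a' b' c' : ZMod 2,
        a + b + c = a' + b' + c' → a' - a = (b' - b) + (c' - c) := by decide
    exact key _ _ _ _ _ _ ((hq x y).trans (hq' x y).symm)
  let d : V →ₗ[ZMod 2] ZMod 2 :=
    AddMonoidHom.toZModLinearMap 2 (AddMonoidHom.mk' (fun x => q' x - q x) hadd)
  have hd : ∀ x, d x = q' x - q x := fun _ => rfl
  have hinj : Function.Injective B := by
    rw [← LinearMap.ker_eq_bot, LinearMap.ker_eq_bot']
    exact hnd
  have hsurj : Function.Surjective B :=
    (LinearMap.injective_iff_surjective_of_finrank_eq_finrank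
      (Subspace.dual_finrank_eq (K := ZMod 2) (V := V)).symm).1 hinj
  obtain ⟨p, hp⟩ := hsurj d
  refine ⟨p, fun x => ?_, fun r hr => hinj ?_⟩
  · rw [hp, hd]; ring
  · ext x
    rw [hp, hd, hr x]; ring
end

section
/- Let V be a vector space over 𝔽₂ of dimension 2g, B a nondegenerate alternating bilinear form on V, and q a quadratic refinement of B. Then the Gauss sum Σ_{v ∈ V} (−1)^(q v) (the sum over all v of +1 if q v = 0 and −1 if q v = 1, taken in ℤ) satisfies (Σ_{v ∈ V} (−1)^(q v))² = 2^(2g). -/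
theorem sgn_add_aux (a b : ZMod 2) :
    (-1 : ℤ) ^ (a + b).val = (-1) ^ a.val * (-1) ^ b.val := by
  revert a b; decide

/-- The Gauss sum of a quadratic refinement `q` of a nondegenerate alternating bilinear
form on a `2g`-dimensional `𝔽₂`-vector space satisfies `(Σ_v (-1)^(q v))² = 2^(2g)`. -/
theorem gauss_sum_of_quadratic_refinement_sq
    (V : Type*) [AddCommGroup V] [Module (ZMod 2) V] [Fintype V] (g : ℕ)
    (hdim : Module.finrank (ZMod 2) V = 2 * g)
    (B : V →ₗ[ZMod 2] V →ₗ[ZMod 2] ZMod 2) (hB : ∀ v : V, B v v = 0)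
    (hnd : ∀ v : V, B v = 0 → v = 0)
    (q : V → ZMod 2) (hq : ∀ x y : V, q (x + y) + q x + q y = B x y) :
    (∑ v : V, (-1 : ℤ) ^ (q v).val) ^ 2 = 2 ^ (2 * g) := by
  have hcard : Fintype.card V = 2 ^ (2 * g) := by
    rw [Module.card_eq_pow_finrank (K := ZMod 2) (V := V), hdim, ZMod.card]
  have hq0 : q 0 = 0 := by
    have h := hq 0 0
    simp only [add_zero, map_zero] at h
    revert h
    generalize q 0 = a
    revert a; decide
  have hinner : ∀ z : V, z ≠ 0 → ∑ y : V, (-1 : ℤ) ^ (B z y).val = 0 := by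
    intro z hz
    obtain ⟨w, hw⟩ : ∃ w, B z w ≠ 0 := by
      by_contra! h
      exact hz (hnd z (LinearMap.ext h))
    have hw1 : B z w = 1 := by
      revert hw; generalize B z w = a; revert a; decide
    have h := Equiv.sum_comp (Equiv.addRight w) (fun y : V => (-1 : ℤ) ^ (B z y).val)
    simp only [Equiv.coe_addRight, map_add, sgn_add_aux, hw1, ← Finset.sum_mul] at h
    have h1 : (-1 : ℤ) ^ (1 : ZMod 2).val = -1 := by decide
    rw [h1] at h
    linarith
  have hkey : ∀ z y : V, (-1 : ℤ) ^ (q (z + y)).val * (-1) ^ (q y).val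
      = (-1) ^ (q z).val * (-1) ^ (B z y).val := by
    intro z y
    rw [← hq z y]
    generalize q (z + y) = a
    generalize q z = b
    generalize q y = c
    revert a b c; decide
  calc (∑ v : V, (-1 : ℤ) ^ (q v).val) ^ 2
      = ∑ y : V, ∑ z : V, (-1 : ℤ) ^ (q (z + y)).val * (-1) ^ (q y).val := by
        rw [sq, Finset.mul_sum]
        refine Finset.sum_congr rfl fun y _ => ?_
        rw [← Finset.sum_mul]
        congr 1
        exact (Equiv.sum_comp (Equiv.addRight y) (fun v : V => (-1 : ℤ) ^ (q v).val)).symm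
    _ = ∑ z : V, (-1 : ℤ) ^ (q z).val * ∑ y : V, (-1 : ℤ) ^ (B z y).val := by
        rw [Finset.sum_comm]
        simp only [hkey, Finset.mul_sum]
    _ = (-1 : ℤ) ^ (q 0).val * ∑ y : V, (-1 : ℤ) ^ (B 0 y).val := by
        refine Fintype.sum_eq_single 0 fun z hz => ?_
        rw [hinner z hz, mul_zero]
    _ = 2 ^ (2 * g) := by
        simp [hq0, hcard]
end

section
/- Let V be a vector space over 𝔽₂ of dimension 2g, B a nondegenerate alternating bilinear form on V, and q a quadratic refinement of B. Then the number of v ∈ V with q v = 0 is either 2^(2g−1) + 2^(g−1) or 2^(2g−1) − 2^(g−1). -/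
def refineSign (a : ZMod 2) : ℤ := if a = 0 then 1 else -1

theorem refineSign_add : ∀ a b : ZMod 2, refineSign (a + b) = refineSign a * refineSign b := by
  decide

theorem refineSign_ne : ∀ a : ZMod 2, a ≠ 0 → refineSign a = -1 := by
  decide

theorem refine_arith : ∀ a b c d : ZMod 2, a + b + c = d → b + a = c + d := by
  decide


/-- A quadratic refinement of a nondegenerate alternating bilinear form on a
`2g`-dimensional `𝔽₂`-vector space has either `2^(2g-1) + 2^(g-1)` or
`2^(2g-1) - 2^(g-1)` zeros. -/
theorem quadratic_refinement_zero_count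
    (V : Type*) [AddCommGroup V] [Module (ZMod 2) V] [Fintype V] (g : ℕ) (hg : 1 ≤ g)
    (hdim : Module.finrank (ZMod 2) V = 2 * g)
    (B : V →ₗ[ZMod 2] V →ₗ[ZMod 2] ZMod 2) (hB : ∀ v : V, B v v = 0)
    (hnd : ∀ v : V, B v = 0 → v = 0)
    (q : V → ZMod 2) (hq : ∀ x y : V, q (x + y) + q x + q y = B x y) :
    Nat.card {v : V // q v = 0} = 2 ^ (2 * g - 1) + 2 ^ (g - 1) ∨
    Nat.card {v : V // q v = 0} = 2 ^ (2 * g - 1) - 2 ^ (g - 1) := by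
  classical
  have hq0 : q 0 = 0 := by
    have h := hq 0 0
    have h3 : ∀ a : ZMod 2, a + a + a = 0 → a = 0 := by decide
    apply h3
    simpa using h
  have hsymm : ∀ x y, B x y = B y x := by
    intro x y
    rw [← hq x y, ← hq y x, add_comm x y]
    ring
  have hcard : (Fintype.card V : ℤ) = 2 ^ (2 * g) := by
    rw [Module.card_eq_pow_finrank (K := ZMod 2), hdim]
    simp [ZMod.card]
  have hchar : ∀ z : V, z ≠ 0 → ∑ x, refineSign (B x z) = 0 := by
    intro z hz
    have hw : ∃ w, B z w ≠ 0 := by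
      by_contra! h
      exact hz (hnd z (LinearMap.ext h))
    obtain ⟨w, hw⟩ := hw
    have h1 : ∑ x, refineSign (B (x + w) z) = ∑ x, refineSign (B x z) :=
      Equiv.sum_comp (Equiv.addRight w) (fun x => refineSign (B x z))
    have h2 : ∀ x, refineSign (B (x + w) z) = - refineSign (B x z) := by
      intro x
      rw [map_add, LinearMap.add_apply, refineSign_add, refineSign_ne (B w z) (by rwa [hsymm])]
      ring
    simp only [h2, Finset.sum_neg_distrib] at h1
    linarith
  set S : ℤ := ∑ v, refineSign (q v) with hS
  have hS2 : S ^ 2 = (2 ^ g) ^ 2 := by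
    have h1 : S ^ 2 = ∑ x, ∑ z, refineSign (q z) * refineSign (B x z) := by
      rw [sq, hS, Finset.sum_mul]
      refine Finset.sum_congr rfl fun x _ => ?_
      rw [Finset.mul_sum, ← Equiv.sum_comp (Equiv.addLeft x)]
      refine Finset.sum_congr rfl fun z _ => ?_
      rw [← refineSign_add, ← refineSign_add]
      congr 1
      exact refine_arith _ _ _ _ (hq x z)
    rw [h1, Finset.sum_comm]
    simp only [← Finset.mul_sum]
    rw [Finset.sum_eq_single 0]
    · simp only [hq0, map_zero]
      simp only [refineSign, if_true, Finset.sum_const, Finset.card_univ]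
      simp only [nsmul_eq_mul, hcard]
      ring
    · intro z _ hz
      rw [hchar z hz, mul_zero]
    · simp
  have hN : S = 2 * (Nat.card {v : V // q v = 0} : ℤ) - 2 ^ (2 * g) := by
    rw [← hcard, Nat.card_eq_fintype_card, Fintype.card_subtype, hS]
    have h1 : ∀ v, refineSign (q v) = 2 * (if q v = 0 then 1 else 0) - 1 := by
      intro v
      unfold refineSign
      split_ifs <;> rfl
    simp only [h1, Finset.sum_sub_distrib, ← Finset.mul_sum, Finset.sum_boole]
    simp
  obtain ⟨k, rfl⟩ : ∃ k, g = k + 1 := ⟨g - 1, by omega⟩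
  have e1 : 2 * (k + 1) - 1 = 2 * k + 1 := by omega
  have e2 : k + 1 - 1 = k := by omega
  rw [e1, e2]
  generalize Nat.card {v : V // q v = 0} = N at *
  have e3 : (2 : ℤ) ^ (2 * (k + 1)) = 2 * 2 ^ (2 * k + 1) := by ring
  have e4 : (2 : ℤ) ^ (k + 1) = 2 * 2 ^ k := by ring
  rw [e3] at hN
  rw [e4] at hS2
  rcases sq_eq_sq_iff_eq_or_eq_neg.mp hS2 with h | h
  · left
    zify
    linarith
  · right
    have h5 : N + 2 ^ k = 2 ^ (2 * k + 1) := by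
      zify
      linarith
    omega
end

section
/- Let V be a vector space over 𝔽₂ of dimension 2g and B a nondegenerate alternating bilinear form on V. Then exactly 2^(g−1)(2^g + 1) quadratic refinements q of B are even (i.e. have exactly 2^(2g−1) + 2^(g−1) zeros) and exactly 2^(g−1)(2^g − 1) are odd (i.e. have exactly 2^(2g−1) − 2^(g−1) zeros). -/
/-- The sign character of `ZMod 2`. -/
def sgnChar (a : ZMod 2) : ℤ := if a = 0 then 1 else -1

theorem sgnChar_add (a b : ZMod 2) : sgnChar (a + b) = sgnChar a * sgnChar b := by
  revert a b; decide

theorem zmod2_eq_add {a b c : ZMod 2} (h : a + b + c = 0) : a = b + c := by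
  revert a b c; decide

theorem exists_refinement {V : Type*} [AddCommGroup V] [Module (ZMod 2) V] [Fintype V]
    (B : V →ₗ[ZMod 2] V →ₗ[ZMod 2] ZMod 2) (hB : ∀ v : V, B v v = 0)
    (hsymm : ∀ x y, B x y = B y x) :
    ∃ q : V → ZMod 2, ∀ x y : V, q (x + y) + q x + q y = B x y := by
  classical
  let b := Module.finBasis (ZMod 2) V
  let A : V →ₗ[ZMod 2] V →ₗ[ZMod 2] ZMod 2 :=
    b.constr (ZMod 2) fun i => b.constr (ZMod 2) fun j => if i < j then B (b i) (b j) else 0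
  have hA : A + A.flip = B := by
    refine b.ext fun i => b.ext fun j => ?_
    have h1 : ∀ i j, A (b i) (b j) = if i < j then B (b i) (b j) else 0 := by
      intro i j
      simp only [A, Module.Basis.constr_basis]
    simp only [LinearMap.add_apply, LinearMap.flip_apply, h1]
    rcases lt_trichotomy i j with h | h | h
    · simp [h, h.not_gt]
    · subst h; simp [hB]
    · simp [h, h.not_gt, hsymm (b j)]
  refine ⟨fun x => A x x, fun x y => ?_⟩
  have h2 : A x y + A y x = B x y := by rw [← hA]; simp
  rw [← h2]
  simp only [map_add, LinearMap.add_apply]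
  generalize A x x = a
  generalize A x y = c
  generalize A y x = d
  generalize A y y = e
  revert a c d e; decide

theorem sum_sgnChar_linear {V : Type*} [AddCommGroup V] [Module (ZMod 2) V] [Fintype V]
    (f : V →ₗ[ZMod 2] ZMod 2) (hf : f ≠ 0) : ∑ x, sgnChar (f x) = 0 := by
  obtain ⟨x0, hx0⟩ : ∃ x, f x ≠ 0 := by
    by_contra! h
    exact hf (LinearMap.ext h)
  have h1 : sgnChar (f x0) = -1 := by simp [sgnChar, hx0]
  have h2 : ∑ x, sgnChar (f (x + x0)) = ∑ x, sgnChar (f x) :=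
    Equiv.sum_comp (Equiv.addRight x0) (fun x => sgnChar (f x))
  simp only [map_add, sgnChar_add, h1, ← Finset.sum_mul] at h2
  linarith

theorem gauss_sq {V : Type*} [AddCommGroup V] [Module (ZMod 2) V] [Fintype V]
    (B : V →ₗ[ZMod 2] V →ₗ[ZMod 2] ZMod 2)
    (hnd : ∀ v : V, B v = 0 → v = 0)
    (q : V → ZMod 2) (hq : ∀ x y : V, q (x + y) + q x + q y = B x y) (h0 : q 0 = 0) :
    (∑ x, sgnChar (q x)) ^ 2 = Fintype.card V := by
  classical
  have key : ∀ z x, sgnChar (q x) * sgnChar (q (x + z)) = sgnChar (q z) * sgnChar (B z x) := by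
    intro z x
    rw [← hq z x, ← sgnChar_add, ← sgnChar_add, add_comm z x]
    congr 1
    generalize q x = a
    generalize q z = b
    generalize q (x + z) = c
    revert a b c; decide
  calc (∑ x, sgnChar (q x)) ^ 2 = ∑ x, ∑ y, sgnChar (q x) * sgnChar (q y) := by
        rw [sq, Finset.sum_mul_sum]
    _ = ∑ x, ∑ z, sgnChar (q x) * sgnChar (q (x + z)) := by
        refine Finset.sum_congr rfl fun x _ => ?_
        exact (Equiv.sum_comp (Equiv.addLeft x) (fun y => sgnChar (q x) * sgnChar (q y))).symm
    _ = ∑ z, sgnChar (q z) * ∑ x, sgnChar (B z x) := by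
        rw [Finset.sum_comm]
        refine Finset.sum_congr rfl fun z _ => ?_
        rw [Finset.mul_sum]
        exact Finset.sum_congr rfl fun x _ => key z x
    _ = Fintype.card V := by
        rw [Finset.sum_eq_single (0 : V)]
        · simp [h0, sgnChar]
        · intro z _ hz
          rw [sum_sgnChar_linear (B z) (fun h => hz (hnd z h)), mul_zero]
        · simp

theorem two_mul_zeros {V : Type*} [Fintype V] (q : V → ZMod 2) :
    2 * (Nat.card {v : V // q v = 0} : ℤ) = Fintype.card V + ∑ x, sgnChar (q x) := by
  classical
  have h : ∑ x, (1 + sgnChar (q x)) = ∑ x, if q x = 0 then (2 : ℤ) else 0 := by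
    refine Finset.sum_congr rfl fun x _ => ?_
    unfold sgnChar
    split_ifs <;> norm_num
  rw [Finset.sum_add_distrib, ← Finset.sum_filter] at h
  simp at h
  rw [h, Nat.card_eq_fintype_card, Fintype.card_subtype]
  ring

theorem two_mul_ones {V : Type*} [Fintype V] (q : V → ZMod 2) :
    2 * (Nat.card {v : V // q v = 1} : ℤ) = Fintype.card V - ∑ x, sgnChar (q x) := by
  have h := two_mul_zeros (fun v => q v + 1)
  have h1 : ∀ a : ZMod 2, sgnChar (a + 1) = - sgnChar a := by decide
  have h2 : ∀ a : ZMod 2, a + 1 = 0 ↔ a = 1 := by decide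
  simp only [h1, h2, Finset.sum_neg_distrib] at h
  rw [h]; ring

/-- Counting refinements whose Gauss sum is a prescribed value. -/
theorem card_refinements {V : Type*} [AddCommGroup V] [Module (ZMod 2) V] [Fintype V]
    (B : V →ₗ[ZMod 2] V →ₗ[ZMod 2] ZMod 2) (hsymm : ∀ x y, B x y = B y x)
    (hnd : ∀ v : V, B v = 0 → v = 0)
    (q : V → ZMod 2) (hq : ∀ x y : V, q (x + y) + q x + q y = B x y) (n : ℤ) :
    Nat.card {p : V → ZMod 2 | (∀ x y : V, p (x + y) + p x + p y = B x y) ∧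
        ∑ x, sgnChar (p x) = n} =
      Nat.card {a : V // sgnChar (q a) * ∑ x, sgnChar (q x) = n} := by
  have hinj : Function.Injective B := by
    rw [injective_iff_map_eq_zero]
    exact hnd
  have hsurj : Function.Surjective B :=
    (LinearMap.injective_iff_surjective_of_finrank_eq_finrank
      (Subspace.dual_finrank_eq (K := ZMod 2) (V := V)).symm).1 hinj
  have hsum : ∀ a, ∑ x, sgnChar (q x + B a x) = sgnChar (q a) * ∑ x, sgnChar (q x) := by
    intro a
    rw [← Equiv.sum_comp (Equiv.addRight a) (fun x => sgnChar (q x)), Finset.mul_sum]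
    refine Finset.sum_congr rfl fun x _ => ?_
    rw [← sgnChar_add, hsymm, ← hq x a, Equiv.coe_addRight]
    congr 1
    generalize q x = u
    generalize q a = v
    generalize q (x + a) = w
    revert u v w; decide
  symm
  refine Nat.card_congr (Equiv.ofBijective
    (fun a => ⟨fun x => q x + B a.1 x, ?_, ?_⟩) ⟨?_, ?_⟩)
  · intro x y
    simp only [← hq x y, map_add]
    generalize q x = u
    generalize q y = v
    generalize q (x + y) = w
    generalize B a.1 x = s
    generalize B a.1 y = t
    revert u v w s t; decide
  · rw [hsum]; exact a.2
  · rintro ⟨a, ha⟩ ⟨a', ha'⟩ h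
    have h' := congrArg Subtype.val h
    simp only at h'
    apply Subtype.ext
    apply hinj
    ext x
    exact add_left_cancel (congrFun h' x)
  · rintro ⟨p, hp, hpn⟩
    let f : V →+ ZMod 2 := AddMonoidHom.mk' (fun x => p x + q x) (by
      intro x y
      have := (hp x y).trans (hq x y).symm
      revert this
      generalize q x = u
      generalize q y = v
      generalize q (x + y) = w
      generalize p x = u'
      generalize p y = v'
      generalize p (x + y) = w'
      revert u v w u' v' w'; decide)
    obtain ⟨a, ha⟩ := hsurj (f.toZModLinearMap 2)
    have hfa : ∀ x, q x + B a x = p x := by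
      intro x
      rw [ha]
      change q x + (p x + q x) = p x
      generalize q x = u
      generalize p x = v
      revert u v; decide
    refine ⟨⟨a, ?_⟩, ?_⟩
    · rw [← hsum, ← hpn]
      simp only [hfa]
    · apply Subtype.ext
      funext x
      exact hfa x

/-- On a `2g`-dimensional `𝔽₂`-vector space with a nondegenerate alternating bilinear
form `B`, exactly `2^(g-1)(2^g + 1)` quadratic refinements of `B` are even (have
`2^(2g-1) + 2^(g-1)` zeros) and exactly `2^(g-1)(2^g - 1)` are odd (have
`2^(2g-1) - 2^(g-1)` zeros). -/
theorem count_even_and_odd_quadratic_refinements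
    (V : Type*) [AddCommGroup V] [Module (ZMod 2) V] [Fintype V] (g : ℕ) (hg : 1 ≤ g)
    (hdim : Module.finrank (ZMod 2) V = 2 * g)
    (B : V →ₗ[ZMod 2] V →ₗ[ZMod 2] ZMod 2) (hB : ∀ v : V, B v v = 0)
    (hnd : ∀ v : V, B v = 0 → v = 0) :
    Nat.card {q : V → ZMod 2 | (∀ x y : V, q (x + y) + q x + q y = B x y) ∧
        Nat.card {v : V // q v = 0} = 2 ^ (2 * g - 1) + 2 ^ (g - 1)} =
      2 ^ (g - 1) * (2 ^ g + 1) ∧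
    Nat.card {q : V → ZMod 2 | (∀ x y : V, q (x + y) + q x + q y = B x y) ∧
        Nat.card {v : V // q v = 0} = 2 ^ (2 * g - 1) - 2 ^ (g - 1)} =
      2 ^ (g - 1) * (2 ^ g - 1) := by
  have hsymm : ∀ x y, B x y = B y x := by
    intro x y
    have h := hB (x + y)
    simp only [map_add, LinearMap.add_apply, hB] at h
    revert h
    generalize B x y = u
    generalize B y x = v
    revert u v; decide
  obtain ⟨q, hq⟩ := exists_refinement B hB hsymm
  have hcard : (Fintype.card V : ℤ) = 2 * 2 * (2 ^ (g - 1)) ^ 2 := by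
    rw [Module.card_eq_pow_finrank (K := ZMod 2), hdim, ZMod.card]
    obtain ⟨k, rfl⟩ := Nat.exists_eq_add_of_le' hg
    push_cast
    ring
  have e1 : 2 ^ (2 * g - 1) = 2 * (2 ^ (g - 1)) ^ 2 := by
    obtain ⟨k, rfl⟩ := Nat.exists_eq_add_of_le' hg
    rw [show 2 * (k + 1) - 1 = 2 * k + 1 by omega]
    simp only [Nat.add_sub_cancel]
    ring
  have e2 : 2 ^ g = 2 * 2 ^ (g - 1) := by
    obtain ⟨k, rfl⟩ := Nat.exists_eq_add_of_le' hg
    simp only [Nat.add_sub_cancel]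
    ring
  have hm : 1 ≤ 2 ^ (g - 1) := Nat.one_le_two_pow
  rw [e1, e2]
  have hcard' : (Fintype.card V : ℤ) = 2 * 2 * ((2 ^ (g - 1) : ℕ) : ℤ) ^ 2 := by
    rw [hcard]; push_cast; rfl
  clear hcard
  generalize 2 ^ (g - 1) = m at *
  have hle : m ≤ 2 * m ^ 2 := by nlinarith
  have hle1 : 1 ≤ 2 * m := by omega
  have z1 : ∀ p : V → ZMod 2, Nat.card {v : V // p v = 0} = 2 * m ^ 2 + m ↔
      ∑ x, sgnChar (p x) = 2 * m := by
    intro p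
    have h := two_mul_zeros p
    rw [hcard'] at h
    zify
    constructor <;> intro h' <;> linarith
  have z2 : ∀ p : V → ZMod 2, Nat.card {v : V // p v = 0} = 2 * m ^ 2 - m ↔
      ∑ x, sgnChar (p x) = - (2 * m) := by
    intro p
    have h := two_mul_zeros p
    rw [hcard'] at h
    zify [hle]
    constructor <;> intro h' <;> linarith
  simp only [z1, z2]
  rw [card_refinements B hsymm hnd q hq, card_refinements B hsymm hnd q hq]
  have h0 : q 0 = 0 := by
    have h := hq 0 0
    simp only [add_zero, map_zero] at h
    revert h
    generalize q 0 = u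
    revert u; decide
  have hS := gauss_sq B hnd q hq h0
  have hz := two_mul_zeros q
  have ho := two_mul_ones q
  rw [hcard'] at hS hz ho
  have hm0 : (0 : ℤ) < m := by exact_mod_cast hm
  have hS' : (∑ x, sgnChar (q x)) = 2 * m ∨ (∑ x, sgnChar (q x)) = -(2 * m) := by
    apply sq_eq_sq_iff_eq_or_eq_neg.1
    rw [hS]; ring
  have c0 : ∀ a : ZMod 2, sgnChar a = 1 ↔ a = 0 := by decide
  have c1 : ∀ a : ZMod 2, sgnChar a = -1 ↔ a = 1 := by decide
  have d1 : ∀ s : ℤ, s * (2 * m) = 2 * m ↔ s = 1 := fun s =>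
    ⟨fun h => by
      have : (s - 1) * m = 0 := by linarith
      rcases mul_eq_zero.1 this with h | h <;> linarith, fun h => by rw [h, one_mul]⟩
  have d2 : ∀ s : ℤ, s * (2 * m) = -(2 * m) ↔ s = -1 := fun s =>
    ⟨fun h => by
      have : (s + 1) * m = 0 := by linarith
      rcases mul_eq_zero.1 this with h | h <;> linarith, fun h => by rw [h]; ring⟩
  have d3 : ∀ s : ℤ, s * -(2 * m) = 2 * m ↔ s = -1 := fun s => by
    rw [← d2, mul_neg, neg_eq_iff_eq_neg]
  have d4 : ∀ s : ℤ, s * -(2 * m) = -(2 * m) ↔ s = 1 := fun s => by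
    rw [← d1, mul_neg, neg_inj]
  rcases hS' with h | h
  · rw [h] at hz ho ⊢
    simp only [d1, d2, c0, c1]
    zify [hle1]
    constructor <;> linarith
  · rw [h] at hz ho ⊢
    simp only [d3, d4, c0, c1]
    zify [hle1]
    constructor <;> linarith
end

section
/- Let W be a finite-dimensional vector space over 𝔽₂ of dimension g ≥ 2 and let V = W × (Module.Dual (ZMod 2) W), with nondegenerate alternating form B ((a, α), (b, β)) = α b + β a. The group GL(W) of linear automorphisms of W acts on V by u • (a, α) = (u a, α ∘ u⁻¹), and this action preserves B. Then δ (a, α) = α a is the unique quadratic refinement of B that is invariant under this GL(W)-action, i.e. satisfying δ (u • v) = δ v for all u ∈ GL(W) and v ∈ V. -/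
/-- The transvection `x ↦ x + φ x • c` with `φ c = 0`, over `𝔽₂`, is an involution. -/
lemma exists_transvection {W : Type*} [AddCommGroup W] [Module (ZMod 2) W]
    (φ : Module.Dual (ZMod 2) W) (c : W) (h : φ c = 0) :
    ∃ u : W ≃ₗ[ZMod 2] W, (∀ x, u x = x + φ x • c) ∧ (∀ x, u.symm x = x + φ x • c) := by
  have key : Function.Involutive
      (LinearMap.id + φ.smulRight c : W →ₗ[ZMod 2] W) := by
    intro x
    have h2 : φ x + φ x = 0 := CharTwo.add_self_eq_zero _
    simp [h, add_assoc, ← add_smul, h2]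
  exact ⟨LinearEquiv.ofInvolutive _ key, fun x => rfl, fun x => rfl⟩

lemma exists_dual_kill {W : Type*} [AddCommGroup W] [Module (ZMod 2) W]
    [FiniteDimensional (ZMod 2) W] (h : 2 ≤ Module.finrank (ZMod 2) W) (c : W) :
    ∃ (φ : Module.Dual (ZMod 2) W) (x : W), φ c = 0 ∧ φ x = 1 := by
  have hne : ∃ x, x ∉ Submodule.span (ZMod 2) {c} := by
    by_contra! hx
    have : Submodule.span (ZMod 2) {c} = ⊤ := by ext; simp [hx]
    have h1 := finrank_span_le_card (R := ZMod 2) ({c} : Set W)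
    rw [this, finrank_top] at h1
    simp at h1
    omega
  obtain ⟨x, hx⟩ := hne
  obtain ⟨φ, hφ, hk⟩ := Submodule.exists_le_ker_of_notMem hx
  refine ⟨φ, x, hk (Submodule.mem_span_singleton_self c), ?_⟩
  exact (Fin.exists_fin_two.mp ⟨φ x, rfl⟩).elim (fun h => absurd h hφ) (fun h => h)

lemma exists_kernel_vec {W : Type*} [AddCommGroup W] [Module (ZMod 2) W]
    [FiniteDimensional (ZMod 2) W] (h : 2 ≤ Module.finrank (ZMod 2) W)
    (φ : Module.Dual (ZMod 2) W) :
    ∃ (c : W) (α : Module.Dual (ZMod 2) W), φ c = 0 ∧ α c = 1 := by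
  have hk : LinearMap.ker φ ≠ ⊥ := by
    apply LinearMap.ker_ne_bot_of_finrank_lt
    simp
    omega
  obtain ⟨c, hc, hc0⟩ := Submodule.exists_mem_ne_zero_of_ne_bot hk
  have : ∃ α : Module.Dual (ZMod 2) W, α c ≠ 0 := by
    by_contra! hx
    exact hc0 ((Module.forall_dual_apply_eq_zero_iff (ZMod 2) c).1 hx)
  obtain ⟨α, hα⟩ := this
  refine ⟨c, α, hc, ?_⟩
  exact (Fin.exists_fin_two.mp ⟨α c, rfl⟩).elim (fun h => absurd h hα) (fun h => h)

/-- On `V = W × W*` (for `W` an `𝔽₂`-vector space of dimension `g ≥ 2`) with the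
nondegenerate alternating form `B ((a,α),(b,β)) = α b + β a`, the group `GL(W)` acts by
`u • (a, α) = (u a, α ∘ u⁻¹)` preserving `B`, and `δ (a,α) = α a` is the unique
quadratic refinement of `B` invariant under this action. -/
theorem delta_unique_GL_invariant_refinement
    (W : Type*) [AddCommGroup W] [Module (ZMod 2) W] [FiniteDimensional (ZMod 2) W]
    (g : ℕ) (hg : 2 ≤ g) (hdim : Module.finrank (ZMod 2) W = g)
    (B : W × Module.Dual (ZMod 2) W → W × Module.Dual (ZMod 2) W → ZMod 2)
    (hBdef : ∀ x y : W × Module.Dual (ZMod 2) W, B x y = x.2 y.1 + y.2 x.1)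
    (δ : W × Module.Dual (ZMod 2) W → ZMod 2)
    (hδdef : ∀ x : W × Module.Dual (ZMod 2) W, δ x = x.2 x.1)
    (act : (W ≃ₗ[ZMod 2] W) → W × Module.Dual (ZMod 2) W → W × Module.Dual (ZMod 2) W)
    (hact : ∀ (u : W ≃ₗ[ZMod 2] W) (v : W × Module.Dual (ZMod 2) W),
      act u v = (u v.1, v.2 ∘ₗ (u.symm : W →ₗ[ZMod 2] W))) :
    -- the action preserves `B`
    (∀ (u : W ≃ₗ[ZMod 2] W) (x y : W × Module.Dual (ZMod 2) W),
      B (act u x) (act u y) = B x y) ∧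
    -- `δ` is a quadratic refinement of `B` invariant under the action
    (∀ x y, δ (x + y) + δ x + δ y = B x y) ∧
    (∀ (u : W ≃ₗ[ZMod 2] W) (v : W × Module.Dual (ZMod 2) W), δ (act u v) = δ v) ∧
    -- and it is the unique such quadratic refinement
    (∀ q : W × Module.Dual (ZMod 2) W → ZMod 2,
      (∀ x y, q (x + y) + q x + q y = B x y) →
      (∀ (u : W ≃ₗ[ZMod 2] W) (v : W × Module.Dual (ZMod 2) W), q (act u v) = q v) →
      q = δ) := by
  subst hdim
  refine ⟨?_, ?_, ?_, ?_⟩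
  · intro u x y
    simp [hBdef, hact]
  · intro x y
    simp only [hBdef, hδdef, Prod.fst_add, Prod.snd_add, map_add, LinearMap.add_apply]
    have : ∀ a b c d : ZMod 2, a + b + (c + d) + a + d = b + c := by decide
    have := this (x.2 x.1) (y.2 x.1) (x.2 y.1) (y.2 y.1)
    rw [add_comm (x.2 y.1) (y.2 x.1), ← this]
  · intro u v
    simp [hδdef, hact]
  · intro q hq hinv
    have cancel' : ∀ a b : ZMod 2, b + b + a = a := by decide
    have h1 : ∀ c : W, q (c, 0) = 0 := by
      intro c
      obtain ⟨φ, x, hc, hx⟩ := exists_dual_kill hg c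
      obtain ⟨u, hu, -⟩ := exists_transvection φ c hc
      have e1 := hinv u (x, 0)
      have e2 := hq (x, 0) (c, 0)
      simp [hact, hu, hx] at e1
      simp [hBdef, e1, cancel'] at e2
      exact e2
    have h2 : ∀ φ : Module.Dual (ZMod 2) W, q (0, φ) = 0 := by
      intro φ
      obtain ⟨c, α, hc, hα⟩ := exists_kernel_vec hg φ
      obtain ⟨u, -, hu⟩ := exists_transvection φ c hc
      have e1 := hinv u (0, α)
      have e2 := hq (0, α) (0, φ)
      have e3 : α ∘ₗ (u.symm : W →ₗ[ZMod 2] W) = α + φ := by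
        ext y
        simp [hu, hα]
      simp only [hact, e3, map_zero] at e1
      simp [hBdef, e1] at e2
      rwa [CharTwo.add_self_eq_zero, zero_add] at e2
    funext ⟨a, α⟩
    have := hq (a, 0) (0, α)
    simpa [h1, h2, hBdef, hδdef] using this
end

section
/- Let V be a finite-dimensional vector space over 𝔽₂, B an alternating bilinear form on V, and q a quadratic refinement of B. If W is a linear subspace of V and t ∈ V is such that q is constant on the coset t + W (i.e. q (t + w) = q t for all w ∈ W), then W is totally isotropic for B: B w w′ = 0 for all w, w′ ∈ W. -/
/-- If a quadratic refinement `q` of an alternating bilinear form `B` is constant on a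
coset `t + W` of a subspace `W`, then `W` is totally isotropic for `B`. -/
theorem coset_constant_refinement_isotropic
    (V : Type*) [AddCommGroup V] [Module (ZMod 2) V] [FiniteDimensional (ZMod 2) V]
    (B : V →ₗ[ZMod 2] V →ₗ[ZMod 2] ZMod 2) (hB : ∀ v : V, B v v = 0)
    (q : V → ZMod 2) (hq : ∀ x y : V, q (x + y) + q x + q y = B x y)
    (W : Submodule (ZMod 2) V) (t : V) (hconst : ∀ w ∈ W, q (t + w) = q t) :
    ∀ w ∈ W, ∀ w' ∈ W, B w w' = 0 := by
  have key : ∀ w ∈ W, q w = B t w := by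
    intro w hw
    have h := hq t w
    rw [hconst w hw, CharTwo.add_self_eq_zero, zero_add] at h
    exact h
  intro w hw w' hw'
  rw [← hq w w', key _ (W.add_mem hw hw'), key w hw, key w' hw', map_add, add_assoc,
    CharTwo.add_self_eq_zero]
end

section
/- Let V be a vector space over 𝔽₂ of dimension 2g, B a nondegenerate alternating bilinear form on V, and q a quadratic refinement of B. Then q is not constant on any coset t + W of a linear subspace W of V with dim W > g. Equivalently, if q (t + w) = q t for all w in a subspace W, then dim W ≤ g. -/
/-- A quadratic refinement of a nondegenerate alternating bilinear form on a
`2g`-dimensional `𝔽₂`-vector space cannot be constant on a coset of a subspace of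
dimension greater than `g`: if `q (t + w) = q t` for all `w ∈ W`, then `dim W ≤ g`. -/
theorem coset_constant_refinement_dim_le
    (V : Type*) [AddCommGroup V] [Module (ZMod 2) V] [FiniteDimensional (ZMod 2) V]
    (g : ℕ) (hdim : Module.finrank (ZMod 2) V = 2 * g)
    (B : V →ₗ[ZMod 2] V →ₗ[ZMod 2] ZMod 2) (hB : ∀ v : V, B v v = 0)
    (hnd : ∀ v : V, B v = 0 → v = 0)
    (q : V → ZMod 2) (hq : ∀ x y : V, q (x + y) + q x + q y = B x y)
    (W : Submodule (ZMod 2) V) (t : V) (hconst : ∀ w ∈ W, q (t + w) = q t) :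
    Module.finrank (ZMod 2) W ≤ g := by
  have two : ∀ a : ZMod 2, a + a = 0 := by decide
  have hqW : ∀ w ∈ W, q w = B t w := by
    intro w hw
    have h := hq t w
    rw [hconst w hw, two, zero_add] at h
    exact h
  have hiso : ∀ x ∈ W, ∀ y ∈ W, B x y = 0 := by
    intro x hx y hy
    rw [← hq x y, hqW _ (W.add_mem hx hy), hqW x hx, hqW y hy, map_add]
    have : B t x + B t y + B t x + B t y = (B t x + B t y) + (B t x + B t y) := by ring
    rw [this, two]
  have hinj : Function.Injective B := by
    rw [← LinearMap.ker_eq_bot, LinearMap.ker_eq_bot']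
    exact hnd
  have hle : W.map B ≤ W.dualAnnihilator := by
    rintro _ ⟨x, hx, rfl⟩
    exact (Submodule.mem_dualAnnihilator _).2 (hiso x hx)
  have h1 := Submodule.finrank_mono hle
  have h2 : Module.finrank (ZMod 2) (W.map B) = Module.finrank (ZMod 2) W :=
    (Submodule.equivMapOfInjective B hinj W).finrank_eq.symm
  have h3 := Subspace.finrank_add_finrank_dualAnnihilator_eq W
  rw [h2] at h1
  have h4 : Module.finrank (ZMod 2) W + Module.finrank (ZMod 2) W ≤ 2 * g := by
    rw [← hdim, ← h3]
    exact Nat.add_le_add_left h1 _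
  omega
end
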